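/- Fix i ∈ {2,…,l} and suppose there exists j < i with c_j ≥ c_i. Let v := min{ c_j : j < i, c_j ≥ c_i }, let i′ := max{ j < i : c_j = v }, and let ς := max C_i (the largest element of the i-th block). Define a new row system R′ by R′_{c_i} := R_{c_i} ∖ {ς}, R′_{c_{i′}+1} := R_{c_{i′}+1} ∪ {ς}, and R′_a := R_a for all other a. Then R′ is the row system of a (standard) Young tableau: |R′_{a+1}| ≤ |R′_a| for all a ≥ 1, and for every a and every k with 1 ≤ k ≤ |R′_{a+1}|, the k-th smallest element of R′_{a+1} is strictly greater than the k-th smallest element of R′_a. (This is the tableau T_I(i) obtained from T_I by moving ς from row c_i to row c_{i′}+1.) -/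

import Mathlib

open Finset

noncomputable section

/-- Sum of the first `j` block sizes (blocks are 1-indexed); `blkSum c i` is also the largest
element `ς_i` of the `i`-th block `C_i`. -/
def blkSum (c : ℕ → ℕ) (j : ℕ) : ℕ := ∑ i ∈ Finset.Icc 1 j, c i

/-- The `a`-th row of the Richardson tableau `T_I`: the set of `a`-th smallest elements of
the blocks `C_j` with `c_j ≥ a`. -/
def RIrow (c : ℕ → ℕ) (l a : ℕ) : Finset ℕ :=
  ((Finset.Icc 1 l).filter fun j => a ≤ c j).image fun j => blkSum c (j - 1) + a

/-- The `k`-th smallest element of a finite set of naturals (1-indexed; junk value `0` if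
`k` is out of range). -/
def kthSmall (s : Finset ℕ) (k : ℕ) : ℕ := (s.sort (· ≤ ·)).getD (k - 1) 0

/-!
If `f` is injective on a finite set `B`, maps `B` into `A` and satisfies `f b < b`, then for every
`n` at least as many elements of `A` lie below `n` as elements of `B` lie in `[0, n]`; hence `A` can
stand directly above `B` in a tableau. So it is enough to match each row of the moved system with
the row above it in this way.

An entry of row `a + 1` of `T_I` is matched with its predecessor, which lies in the same chain and
in row `a`. The last entry `ς` of `C_i` is the predecessor of no entry of row `c_i + 1`, as that
entry would have to lie in `C_i` too; so `ς` can be removed from row `c_i`. For the same reason the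
last entry `ς'` of `C_{i'}` is still free in row `c_{i'}`, and since `i' < i` gives `ς' < ς`, it
can be matched with `ς` in row `c_{i'} + 1`.
-/

/-- `f` matches the entries of the row `B` with distinct smaller entries of the row `A`; such an
`f` witnesses that `A` can stand directly above `B` in a tableau. -/
structure IsColumnMatching {α : Type*} [LT α] (f : α → α) (B A : Set α) : Prop where
  injOn : Set.InjOn f B
  mapsTo : Set.MapsTo f B A
  lt : ∀ b ∈ B, f b < b

namespace IsColumnMatching

section LT

variable {α : Type*} [LT α] {f : α → α}

theorem mono {A B B' : Set α} (h : IsColumnMatching f B A)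
    (hB : B' ⊆ B) : IsColumnMatching f B' A :=
  ⟨h.injOn.mono hB, h.mapsTo.mono_left hB, fun b hb => h.lt b (hB hb)⟩

theorem update_insert [DecidableEq α] {A B : Set α} {x y : α} (h : IsColumnMatching f B A)
    (hxA : x ∈ A) (hxB : x ∉ f '' B) (hxy : x < y) :
    IsColumnMatching (Function.update f y x) (insert y B) A where
  injOn b hb b' hb' hbb' := by
    have hne : ∀ b ∈ B, f b ≠ x := fun b hb hbx => hxB ⟨b, hb, hbx⟩
    have hinj := h.injOn
    grind [Function.update_apply, Set.InjOn]
  mapsTo b hb := by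
    rcases eq_or_ne b y with rfl | hby
    · rwa [Function.update_self]
    · rw [Function.update_of_ne hby]
      exact h.mapsTo (hb.resolve_left hby)
  lt b hb := by
    rcases eq_or_ne b y with rfl | hby
    · rwa [Function.update_self]
    · rw [Function.update_of_ne hby]
      exact h.lt b (hb.resolve_left hby)

theorem card_le_card {A B : Finset α} (h : IsColumnMatching f (B : Set α) A) : #B ≤ #A :=
  card_le_card_of_injOn f h.mapsTo h.injOn

end LT

theorem count_succ_le_count {f : ℕ → ℕ} {A B : Finset ℕ}
    (h : IsColumnMatching f (B : Set ℕ) A) (n : ℕ) :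
    Nat.count (· ∈ B) (n + 1) ≤ Nat.count (· ∈ A) n := by
  simp only [Nat.count_eq_card_filter_range]
  refine card_le_card_of_injOn f (fun b hb => ?_) (h.injOn.mono fun b hb => (mem_filter.1 hb).2)
  obtain ⟨hbn, hbB⟩ := mem_filter.1 hb
  have hfb : f b < n := (h.lt b hbB).trans_le (Nat.lt_succ_iff.1 (mem_range.1 hbn))
  exact mem_filter.2 ⟨mem_range.2 hfb, h.mapsTo hbB⟩

theorem nth_lt_nth {f : ℕ → ℕ} {A B : Finset ℕ} (h : IsColumnMatching f (B : Set ℕ) A) {m : ℕ}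
    (hm : m < #B) : Nat.nth (· ∈ A) m < Nat.nth (· ∈ B) m := by
  apply Nat.nth_lt_of_lt_count
  calc
    m < m + 1 := m.lt_succ_self
    _ = Nat.count (· ∈ B) (Nat.nth (· ∈ B) m + 1) :=
      (Nat.count_nth_succ fun _ => by simpa using! hm).symm
    _ ≤ Nat.count (· ∈ A) (Nat.nth (· ∈ B) m) := h.count_succ_le_count _

end IsColumnMatching

theorem kthSmall_eq_nth (s : Finset ℕ) (k : ℕ) : kthSmall s k = Nat.nth (· ∈ s) (k - 1) := by
  have hfin : (Set.ofPred (· ∈ s)).Finite := s.finite_toSet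
  have hs : hfin.toFinset = s := by ext; simp
  rw [Nat.nth_eq_getD_sort hfin, hs, kthSmall]

/-- The sets `R 1, R 2, …` are the rows of a Young tableau; `R 0` is ignored. -/
def IsYoungRowSystem (R : ℕ → Finset ℕ) : Prop :=
  (∀ a, 1 ≤ a → #(R (a + 1)) ≤ #(R a)) ∧
    ∀ a, 1 ≤ a → ∀ k, 1 ≤ k → k ≤ #(R (a + 1)) → kthSmall (R a) k < kthSmall (R (a + 1)) k

theorem isYoungRowSystem_of_isColumnMatching {R : ℕ → Finset ℕ}
    (h : ∀ a, 1 ≤ a → ∃ f, IsColumnMatching f (R (a + 1) : Set ℕ) (R a)) : IsYoungRowSystem R := by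
  refine ⟨fun a ha => ?_, fun a ha k hk hkR => ?_⟩
  · obtain ⟨f, hf⟩ := h a ha
    exact hf.card_le_card
  · obtain ⟨f, hf⟩ := h a ha
    rw [kthSmall_eq_nth, kthSmall_eq_nth]
    exact hf.nth_lt_nth (by lia)

theorem blkSum_eq_add (c : ℕ → ℕ) {j : ℕ} (hj : 1 ≤ j) : blkSum c j = blkSum c (j - 1) + c j := by
  obtain ⟨m, rfl⟩ := Nat.exists_eq_add_of_le' hj
  exact sum_Icc_succ_top hj c

theorem blkSum_mono (c : ℕ → ℕ) : Monotone (blkSum c) := fun _ _ h =>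
  sum_le_sum_of_subset (Icc_subset_Icc_right h)

theorem blkSum_lt_blkSum {c : ℕ → ℕ} {i j : ℕ} (hij : i < j) (hcj : 0 < c j) :
    blkSum c i < blkSum c j := by
  have hmono := blkSum_mono c (Nat.le_sub_one_of_lt hij)
  have hj := blkSum_eq_add c (Nat.one_le_of_lt hij)
  lia

theorem mem_RIrow {c : ℕ → ℕ} {l a x : ℕ} :
    x ∈ RIrow c l a ↔ ∃ j, 1 ≤ j ∧ j ≤ l ∧ a ≤ c j ∧ blkSum c (j - 1) + a = x := by
  simp only [RIrow, mem_image, mem_filter, mem_Icc, and_assoc]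

theorem blkSum_mem_RIrow {c : ℕ → ℕ} {l j : ℕ} (hj : 1 ≤ j) (hjl : j ≤ l) :
    blkSum c j ∈ RIrow c l (c j) :=
  mem_RIrow.2 ⟨j, hj, hjl, le_rfl, (blkSum_eq_add c hj).symm⟩

theorem isColumnMatching_pred_RIrow (c : ℕ → ℕ) (l a : ℕ) :
    IsColumnMatching Nat.pred (RIrow c l (a + 1) : Set ℕ) (RIrow c l a) := by
  have hpos : ∀ b ∈ RIrow c l (a + 1), 0 < b := fun b hb => by
    obtain ⟨j, -, -, -, rfl⟩ := mem_RIrow.1 hb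
    lia
  refine ⟨fun b hb b' hb' => Nat.pred_inj (hpos b hb) (hpos b' hb'), fun b hb => ?_,
    fun b hb => Nat.pred_lt (hpos b hb).ne'⟩
  obtain ⟨j, hj, hjl, haj, rfl⟩ := mem_RIrow.1 hb
  exact mem_RIrow.2 ⟨j, hj, hjl, Nat.le_of_succ_le haj, rfl⟩

theorem blkSum_add_one_notMem_RIrow {c : ℕ → ℕ} {i : ℕ} (hi : 1 ≤ i) (hci : 0 < c i) (l : ℕ) :
    blkSum c i + 1 ∉ RIrow c l (c i + 1) := by
  intro hmem
  obtain ⟨j, hj, -, hcj, heq⟩ := mem_RIrow.1 hmem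
  have hstart : blkSum c (j - 1) = blkSum c (i - 1) := by
    have := blkSum_eq_add c hi
    lia
  have hji : j - 1 = i - 1 := by
    rcases lt_trichotomy j i with hlt | rfl | hlt
    · have := blkSum_mono c (Nat.le_sub_one_of_lt hlt)
      have := blkSum_eq_add c hj
      lia
    · rfl
    · have := blkSum_mono c (Nat.le_sub_one_of_lt hlt)
      have := blkSum_eq_add c hi
      lia
  obtain rfl : j = i := by lia
  lia

theorem blkSum_notMem_pred_image_RIrow {c : ℕ → ℕ} {i : ℕ} (hi : 1 ≤ i) (hci : 0 < c i) (l : ℕ) :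
    blkSum c i ∉ Nat.pred '' (RIrow c l (c i + 1) : Set ℕ) := by
  rintro ⟨b, hb, hpred⟩
  have hb_pos : 0 < b := (Nat.zero_le _).trans_lt ((isColumnMatching_pred_RIrow c l _).lt b hb)
  obtain rfl : b = blkSum c i + 1 := by
    rw [← hpred]
    exact (Nat.succ_pred_eq_of_pos hb_pos).symm
  exact blkSum_add_one_notMem_RIrow hi hci l hb

/-- The rows of `T_I` after the last entry of the `i`-th chain has been moved from row `c i` to row
`c i' + 1`; for `i'` chosen as in the paper these are the rows of `T_I(i)`. -/
def movedRow (c : ℕ → ℕ) (l i i' a : ℕ) : Finset ℕ :=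
  if a = c i then (RIrow c l a).erase (blkSum c i)
  else if a = c i' + 1 then insert (blkSum c i) (RIrow c l a)
  else RIrow c l a

theorem mem_movedRow_of_mem_RIrow {c : ℕ → ℕ} {l i i' a x : ℕ} (hx : x ∈ RIrow c l a)
    (hne : a = c i → x ≠ blkSum c i) : x ∈ movedRow c l i i' a := by
  unfold movedRow
  split_ifs with hai hai'
  · exact mem_erase.2 ⟨hne hai, hx⟩
  · exact mem_insert_of_mem hx
  · exact hx

theorem movedRow_subset_insert (c : ℕ → ℕ) (l i i' a : ℕ) :
    movedRow c l i i' a ⊆ insert (blkSum c i) (RIrow c l a) := by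
  unfold movedRow
  split_ifs
  · exact (erase_subset _ _).trans (subset_insert _ _)
  · exact Subset.rfl
  · exact subset_insert _ _

theorem movedRow_subset_RIrow {c : ℕ → ℕ} {l i i' a : ℕ} (ha : a ≠ c i' + 1) :
    movedRow c l i i' a ⊆ RIrow c l a := by
  rw [movedRow, if_neg ha]
  split_ifs
  · exact erase_subset _ _
  · exact Subset.rfl

theorem isColumnMatching_pred_movedRow {c : ℕ → ℕ} {i : ℕ} (hi : 1 ≤ i) (hci : 0 < c i)
    (l i' a : ℕ) :
    IsColumnMatching Nat.pred (RIrow c l (a + 1) : Set ℕ) (movedRow c l i i' a) where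
  injOn := (isColumnMatching_pred_RIrow c l a).injOn
  mapsTo b hb := by
    refine mem_movedRow_of_mem_RIrow ((isColumnMatching_pred_RIrow c l a).mapsTo hb) ?_
    rintro rfl hpred
    exact blkSum_notMem_pred_image_RIrow hi hci l ⟨b, hb, hpred⟩
  lt := (isColumnMatching_pred_RIrow c l a).lt

theorem exists_isColumnMatching_movedRow {c : ℕ → ℕ} {l i i' : ℕ} (hci : 0 < c i) (hi' : 1 ≤ i')
    (hlt : i' < i) (hil : i ≤ l) (hle : c i ≤ c i') (a : ℕ) :
    ∃ f, IsColumnMatching f (movedRow c l i i' (a + 1) : Set ℕ) (movedRow c l i i' a) := by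
  have hpred := isColumnMatching_pred_movedRow (hi'.trans hlt.le) hci l i' a
  rcases eq_or_ne a (c i') with rfl | ha
  · have hς : blkSum c i' < blkSum c i := blkSum_lt_blkSum hlt hci
    have hmem : blkSum c i' ∈ movedRow c l i i' (c i') :=
      mem_movedRow_of_mem_RIrow (blkSum_mem_RIrow hi' (hlt.le.trans hil)) fun _ => hς.ne
    have hfree := blkSum_notMem_pred_image_RIrow hi' (hci.trans_le hle) l
    refine ⟨_, (hpred.update_insert hmem hfree hς).mono ?_⟩
    exact_mod_cast movedRow_subset_insert c l i i' (c i' + 1)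
  · exact ⟨Nat.pred, hpred.mono (movedRow_subset_RIrow (by lia))⟩

theorem moved_row_system_isYoungTableau_general {c : ℕ → ℕ} {l i i' : ℕ} (hci : 0 < c i)
    (hi' : 1 ≤ i') (hlt : i' < i) (hil : i ≤ l) (hle : c i ≤ c i') :
    IsYoungRowSystem (movedRow c l i i') :=
  isYoungRowSystem_of_isColumnMatching fun a _ =>
    exists_isColumnMatching_movedRow hci hi' hlt hil hle a

theorem nearest_smallest_block_spec {c : ℕ → ℕ} {i i' v : ℕ}
    (hex : ∃ j, 1 ≤ j ∧ j < i ∧ c i ≤ c j)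
    (hv : v = sInf {u | ∃ j, 1 ≤ j ∧ j < i ∧ c i ≤ c j ∧ c j = u})
    (hi' : i' = sSup {j | 1 ≤ j ∧ j < i ∧ c j = v}) :
    1 ≤ i' ∧ i' < i ∧ c i ≤ c i' := by
  have hv_mem : v ∈ {u | ∃ j, 1 ≤ j ∧ j < i ∧ c i ≤ c j ∧ c j = u} := by
    obtain ⟨j, hj, hji, hcj⟩ := hex
    exact hv ▸ Nat.sInf_mem ⟨c j, j, hj, hji, hcj, rfl⟩
  obtain ⟨j, hj, hji, hcj, hcjv⟩ := hv_mem
  have hi'_mem : i' ∈ {j | 1 ≤ j ∧ j < i ∧ c j = v} :=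
    hi' ▸ Nat.sSup_mem ⟨j, hj, hji, hcjv⟩ ⟨i, fun _ hx => hx.2.1.le⟩
  obtain ⟨hi1, hlt, hci'⟩ := hi'_mem
  exact ⟨hi1, hlt, by rwa [hci', ← hcjv]⟩

/-- Lemma 2.15: moving the largest entry `ς = ς_i` of the `i`-th chain of the Richardson
tableau `T_I` from row `c_i` to row `c_{i'} + 1` (where `i' < i` is maximal with `c_{i'}`
minimal such that `c_{i'} ≥ c_i`) again yields the row system of a standard Young tableau,
namely `T_I(i)`. -/
theorem moved_row_system_isYoungTableau
    (l : ℕ) (hl : 1 ≤ l) (c : ℕ → ℕ) (hc : ∀ j ∈ Finset.Icc 1 l, 0 < c j)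
    (i : ℕ) (hi2 : 2 ≤ i) (hil : i ≤ l)
    (hex : ∃ j, 1 ≤ j ∧ j < i ∧ c i ≤ c j)
    (v : ℕ) (hv : v = sInf {u | ∃ j, 1 ≤ j ∧ j < i ∧ c i ≤ c j ∧ c j = u})
    (i' : ℕ) (hi' : i' = sSup {j | 1 ≤ j ∧ j < i ∧ c j = v})
    (R' : ℕ → Finset ℕ)
    (hR' : ∀ a, R' a =
      if a = c i then (RIrow c l a).erase (blkSum c i)
      else if a = c i' + 1 then insert (blkSum c i) (RIrow c l a)
      else RIrow c l a) :
    (∀ a, 1 ≤ a → (R' (a + 1)).card ≤ (R' a).card) ∧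
    (∀ a, 1 ≤ a → ∀ k, 1 ≤ k → k ≤ (R' (a + 1)).card →
      kthSmall (R' a) k < kthSmall (R' (a + 1)) k) := by
  obtain rfl : R' = movedRow c l i i' := funext hR'
  obtain ⟨hi1, hlt, hle⟩ := nearest_smallest_block_spec hex hv hi'
  exact moved_row_system_isYoungTableau_general (hc i (mem_Icc.2 ⟨by lia, hil⟩)) hi1 hlt hil hle

end
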